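/- arXiv:2002.11292 — 3 statements merged into one kernel-verified Lean document; each statement's English description precedes it below -/
import Mathlib

section
/- With the notation of the context, C^{BR_U}_*(X;ℤ) = (C^{BR_U}_n(X;ℤ), ∂^{BR_U}_n)_{n∈ℤ} is a chain complex; that is, ∂^{BR_U}_{n−1} ∘ ∂^{BR_U}_n = 0 for every integer n. -/
open FreeAbelianGroup
open scoped TensorProduct

namespace GAlex

variable {G M A : Type*} [Group G] [AddCommGroup M] [DistribMulAction Gᵐᵒᵖ M] [AddCommGroup A]

/-- The right action `m · g` of a group element `g : G` on `m : M`
(coming from the right `ℤ[G]`-module structure on `M`). -/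
def ract (m : M) (g : G) : M := MulOpposite.op g • m

variable (φ : G →* G)

/-- The operation `(m,g) ⊳ (n,h) = (mh + n(φ(h) − h), h⁻¹gh)` of the `G`-Alexander biquandle. -/
def under (x y : M × G) : M × G :=
  (ract x.1 y.2 + ract y.1 (φ y.2) - ract y.1 y.2, y.2⁻¹ * x.2 * y.2)

/-- The operation `(m,g) ⊚ (n,h) = (mφ(h), g)` of the `G`-Alexander biquandle. -/
def overOp (x y : M × G) : M × G := (ract x.1 (φ y.2), x.2)

/-- The face `g_{⟨p⟩}` (delete the `p`-th entry). -/
def dGdel (n : ℕ) (p : Fin (n + 1)) (g : Fin (n + 1) → G) : Fin n → G :=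
  fun j => g (p.succAbove j)

/-- The face `g_{⟨⊲p⟩}` (conjugate the first entries by `g p` and delete the `p`-th entry). -/
def dGconj (n : ℕ) (p : Fin (n + 1)) (g : Fin (n + 1) → G) : Fin n → G :=
  fun j => if (j : ℕ) < (p : ℕ) then (g p)⁻¹ * g j.castSucc * g p else g j.succ

/-- The face `m_{⟨p⟩}` (merge the two entries adjacent to position `p`;
for `p = 0` drop the first entry). -/
def dMmer (n : ℕ) (p : Fin (n + 1)) (m : Fin (n + 1) → M) : Fin n → M :=
  fun j =>
    if (j : ℕ) + 1 < (p : ℕ) then m j.castSucc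
    else if (j : ℕ) + 1 = (p : ℕ) then m j.castSucc + m j.succ
    else m j.succ

/-- The face `m_{⟨⊲p⟩}`. -/
def dMconj (n : ℕ) (p : Fin (n + 1)) (g : Fin (n + 1) → G) (m : Fin (n + 1) → M) : Fin n → M :=
  fun j =>
    if (j : ℕ) + 1 < (p : ℕ) then ract (m j.castSucc) (g p)
    else if (j : ℕ) + 1 = (p : ℕ) then ract (m j.castSucc) (g p) + ract (m j.succ) (φ (g p))
    else ract (m j.succ) (φ (g p))

/-- The boundary map `∂^{BR_U}_{n+1} : C^{BR_U}_{n+1}(X;ℤ) → C^{BR_U}_n(X;ℤ)`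
(the boundary `∂^{BR_U}_k` is `0` for `k ≤ 1`, which agrees with this formula at `n = 0`). -/
def dBRU (n : ℕ) :
    FreeAbelianGroup ((Fin (n + 1) → G) × (Fin (n + 1) → M)) →+
      FreeAbelianGroup ((Fin n → G) × (Fin n → M)) :=
  FreeAbelianGroup.lift fun x =>
    ∑ p : Fin (n + 1),
      (-1 : ℤ) ^ (p : ℕ) •
        (FreeAbelianGroup.of (dGdel n p x.1, dMmer n p x.2) -
          FreeAbelianGroup.of (dGconj n p x.1, dMconj φ n p x.1 x.2))

/-- The birack boundary map `∂^{BR}_{n+1} : C^{BR}_{n+1}(X;ℤ) → C^{BR}_n(X;ℤ)`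
for the `G`-Alexander biquandle `X = M × G` (with trivial `X`-set). -/
def dBR (n : ℕ) :
    FreeAbelianGroup (Fin (n + 1) → M × G) →+ FreeAbelianGroup (Fin n → M × G) :=
  FreeAbelianGroup.lift fun x =>
    ∑ p : Fin (n + 1),
      (-1 : ℤ) ^ (p : ℕ) •
        (FreeAbelianGroup.of (fun j => x (p.succAbove j)) -
          FreeAbelianGroup.of (fun j : Fin n =>
            if (j : ℕ) < (p : ℕ) then under φ (x j.castSucc) (x p)
            else overOp φ (x j.succ) (x p)))

/-- `γ_n((m₁,g₁),…,(m_n,g_n)) = (g₁,…,g_n; m₁−m₂, …, m_{n−1}−m_n, m_n)`. -/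
def gammaMap (n : ℕ) :
    FreeAbelianGroup (Fin n → M × G) →+ FreeAbelianGroup ((Fin n → G) × (Fin n → M)) :=
  FreeAbelianGroup.lift fun x =>
    FreeAbelianGroup.of
      (fun j => (x j).2,
       fun j => (x j).1 - if h : (j : ℕ) + 1 < n then (x ⟨(j : ℕ) + 1, h⟩).1 else 0)

/-- `r_n(g₁,…,g_n; m₁,…,m_n) = ((m₁+⋯+m_n, g₁), (m₂+⋯+m_n, g₂), …, (m_n, g_n))`. -/
def rMap (n : ℕ) :
    FreeAbelianGroup ((Fin n → G) × (Fin n → M)) →+ FreeAbelianGroup (Fin n → M × G) :=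
  FreeAbelianGroup.lift fun p =>
    FreeAbelianGroup.of fun j => ((∑ i ∈ Finset.Ici j, p.2 i), p.1 j)

/-- The boundary map `∂^{BR_U}_{d+1}` of `C^{BR_U}_*(X;ℤ)_X` (the version with `X`-set `X`,
whose degree-`d` chain group is free on `(1+d)`-tuples); it is `0` in degrees `≤ 1`. -/
def dBRUX : (d : ℕ) →
    FreeAbelianGroup ((Fin (d + 2) → G) × (Fin (d + 2) → M)) →+
      FreeAbelianGroup ((Fin (d + 1) → G) × (Fin (d + 1) → M))
  | 0 => 0
  | d + 1 =>
    FreeAbelianGroup.lift fun x =>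
      ∑ i : Fin (d + 2),
        (-1 : ℤ) ^ (i : ℕ) •
          (FreeAbelianGroup.of (dGdel (d + 2) i.succ x.1, dMmer (d + 2) i.succ x.2) -
            FreeAbelianGroup.of (dGconj (d + 2) i.succ x.1, dMconj φ (d + 2) i.succ x.1 x.2))

/-- The boundary map `∂^{BR}_{d+1}` of `C^{BR}_*(X;ℤ)_X` (the version with `X`-set `X`);
it is `0` in degrees `≤ 1`. -/
def dBRX : (d : ℕ) →
    FreeAbelianGroup (Fin (d + 2) → M × G) →+ FreeAbelianGroup (Fin (d + 1) → M × G)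
  | 0 => 0
  | d + 1 =>
    FreeAbelianGroup.lift fun x =>
      ∑ i : Fin (d + 2),
        (-1 : ℤ) ^ (i : ℕ) •
          (FreeAbelianGroup.of (fun j => x (i.succ.succAbove j)) -
            FreeAbelianGroup.of (fun j : Fin (d + 2) =>
              if (j : ℕ) < (i : ℕ) + 1 then under φ (x j.castSucc) (x i.succ)
              else overOp φ (x j.succ) (x i.succ)))


/-!
Write each face `⊲p` as the translation of the tuple along its `p`-th entry followed by the plain
face `p`. The plain faces satisfy the presimplicial identity and commute with translations along
surviving entries, and any two translations commute because `φ(G)` acts on `M` by maps commuting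
with the action of `G`. Hence all faces, plain or conjugated, satisfy the identities of a precubical
set, their differences satisfy the presimplicial identity, and the terms of `∂ ∘ ∂` cancel in pairs
obtained by deleting the same two positions in the opposite order.

The order of deletion is swapped by `(p, q) ↦ (p.succAbove q, q.predAbove p)`: deleting position `p`
and then `q` is the same as deleting `p.succAbove q` and then `q.predAbove p`.
-/

theorem ract_mul (m : M) (g h : G) : ract m (g * h) = ract (ract m g) h := by
  simp only [ract, MulOpposite.op_mul, mul_smul]

theorem ract_one (m : M) : ract m (1 : G) = m := one_smul _ m

theorem add_ract (m m' : M) (g : G) : ract (m + m') g = ract m g + ract m' g :=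
  smul_add _ m m'

section Alternating

variable {B C D : Type*} [AddCommGroup B] [AddCommGroup C] [AddCommGroup D] {n : ℕ}

theorem alternating_sum_eq_zero_of_swap (f : Fin (n + 1) → Fin n → B)
    (hf : ∀ p q, f (p.succAbove q) (q.predAbove p) = f p q) :
    ∑ p : Fin (n + 1), ∑ q : Fin n, (-1 : ℤ) ^ (p + q : ℕ) • f p q = 0 := by
  rw [← Fintype.sum_prod_type'
    (f := fun (p : Fin (n + 1)) (q : Fin n) => (-1 : ℤ) ^ (p + q : ℕ) • f p q)]
  refine Finset.sum_ninvolution (fun x => (x.1.succAbove x.2, x.2.predAbove x.1)) ?_ ?_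
    (fun _ => Finset.mem_univ _) ?_
  · rintro ⟨p, q⟩
    simp only [hf, Fin.neg_one_pow_succAbove_add_predAbove, neg_smul, add_neg_cancel]
  · rintro ⟨p, q⟩ - h
    exact p.succAbove_ne q (congrArg Prod.fst h)
  · rintro ⟨p, q⟩
    exact Prod.ext (p.succAbove_succAbove_predAbove q) (p.predAbove_predAbove_succAbove q)

theorem alternating_sum_comp_eq_zero (d : Fin n → C →+ D) (d' : Fin (n + 1) → B →+ C)
    (hd : ∀ p q, (d (q.predAbove p)).comp (d' (p.succAbove q)) = (d q).comp (d' p)) :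
    (∑ q : Fin n, (-1 : ℤ) ^ (q : ℕ) • d q).comp
      (∑ p : Fin (n + 1), (-1 : ℤ) ^ (p : ℕ) • d' p) = 0 := by
  ext x
  rw [AddMonoidHom.zero_apply,
    ← alternating_sum_eq_zero_of_swap (fun p q => d q (d' p x)) fun p q =>
      DFunLike.congr_fun (hd p q) x]
  simp only [AddMonoidHom.comp_apply, AddMonoidHom.finsetSum_apply, AddMonoidHom.smul_apply,
    map_sum, map_zsmul, Finset.smul_sum, pow_add, mul_smul]

end Alternating

/-- The free generators `(g₁, …, gₙ; m₁, …, mₙ)` of `C^{BR_U}_n(X;ℤ)`. -/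
abbrev Cell (G M : Type*) (n : ℕ) := (Fin n → G) × (Fin n → M)

section PlainFaces

variable {H N : Type*} [AddCommGroup N] {n : ℕ}

theorem dMmer_dMmer_swap (p : Fin (n + 2)) (q : Fin (n + 1)) (m : Fin (n + 2) → N) :
    dMmer n (q.predAbove p) (dMmer (n + 1) (p.succAbove q) m) =
      dMmer n q (dMmer (n + 1) p m) := by
  funext k
  rcases lt_or_ge q.castSucc p with h | h
  · rw [Fin.succAbove_of_castSucc_lt _ _ h, Fin.predAbove_of_castSucc_lt _ _ h]
    simp only [dMmer, Fin.lt_def, Fin.val_castSucc, Fin.val_pred, Fin.val_succ,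
      Fin.castSucc_succ] at h ⊢
    grind
  · rw [Fin.succAbove_of_le_castSucc _ _ h, Fin.predAbove_of_le_castSucc _ _ h]
    simp only [dMmer, Fin.le_def, Fin.val_castSucc, Fin.coe_castPred, Fin.val_succ] at h ⊢
    grind

/-- The face `(g_{⟨p⟩}; m_{⟨p⟩})`. -/
def delFace (p : Fin (n + 1)) (x : Cell H N (n + 1)) : Cell H N n :=
  (dGdel n p x.1, dMmer n p x.2)

theorem delFace_delFace_swap (p : Fin (n + 2)) (q : Fin (n + 1)) (x : Cell H N (n + 2)) :
    delFace (q.predAbove p) (delFace (p.succAbove q) x) = delFace q (delFace p x) :=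
  Prod.ext (Fin.removeNth_removeNth_eq_swap x.1 q p).symm (dMmer_dMmer_swap p q x.2)

end PlainFaces

section ConjugatedFaces

variable {n : ℕ}

/-- Translation of a cell along its `p`-th entry: `g_p` acts on the entries before position `p` and
`φ(g_p)` on the entries of `m` from position `p` on. The entry `g_p` itself is left unchanged, so
that `⊲p` is the composite of this translation with the plain face at `p`. -/
def twist (p : Fin n) (x : Cell G M n) : Cell G M n :=
  (fun j => if j < p then (x.1 p)⁻¹ * x.1 j * x.1 p else x.1 j,
    fun j => ract (x.2 j) (if j < p then x.1 p else φ (x.1 p)))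

/-- The face `(g_{⟨⊲p⟩}; m_{⟨⊲p⟩})`. -/
def conjFace (p : Fin (n + 1)) (x : Cell G M (n + 1)) : Cell G M n :=
  (dGconj n p x.1, dMconj φ n p x.1 x.2)

theorem conjFace_eq_delFace_twist (p : Fin (n + 1)) (x : Cell G M (n + 1)) :
    conjFace φ p x = delFace p (twist φ p x) := by
  ext j
  · simp only [conjFace, delFace, twist, dGconj, dGdel, Fin.succAbove, Fin.lt_def,
      Fin.val_castSucc]
    grind
  · simp only [conjFace, delFace, twist, dMconj, dMmer, Fin.lt_def, Fin.val_castSucc, Fin.val_succ]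
    grind

theorem delFace_twist_succAbove (p : Fin (n + 1)) (q : Fin n) (x : Cell G M (n + 1)) :
    delFace p (twist φ (p.succAbove q) x) = twist φ q (delFace p x) := by
  ext j
  · simp only [delFace, twist, dGdel, Fin.succAbove_lt_succAbove_iff]
  · -- The two entries merged at `p` lie on the same side of the surviving entry `q`.
    simp only [delFace, twist, dMmer, dGdel, Fin.lt_def, Fin.val_castSucc, Fin.val_succ]
    grind [add_ract, Fin.succAbove]

theorem conjFace_delFace_swap (p : Fin (n + 2)) (q : Fin (n + 1)) (x : Cell G M (n + 2)) :
    conjFace φ (q.predAbove p) (delFace (p.succAbove q) x) = delFace q (conjFace φ p x) := by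
  rw [conjFace_eq_delFace_twist, conjFace_eq_delFace_twist, ← delFace_twist_succAbove,
    Fin.succAbove_succAbove_predAbove, delFace_delFace_swap]

theorem delFace_conjFace_swap (p : Fin (n + 2)) (q : Fin (n + 1)) (x : Cell G M (n + 2)) :
    delFace (q.predAbove p) (conjFace φ (p.succAbove q) x) = conjFace φ q (delFace p x) := by
  rw [conjFace_eq_delFace_twist, conjFace_eq_delFace_twist, delFace_delFace_swap,
    delFace_twist_succAbove]

/-- The `p`-th summand of the boundary `∂^{BR_U}_{n+1}`, without its sign. -/
def faceDiff (p : Fin (n + 1)) :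
    FreeAbelianGroup (Cell G M (n + 1)) →+ FreeAbelianGroup (Cell G M n) :=
  FreeAbelianGroup.map (delFace p) - FreeAbelianGroup.map (conjFace φ p)

theorem dBRU_eq_alternating_sum (n : ℕ) :
    dBRU (M := M) φ n = ∑ p : Fin (n + 1), (-1 : ℤ) ^ (p : ℕ) • faceDiff φ p := by
  ext x
  simp [dBRU, faceDiff, delFace, conjFace]

section CentralAction

variable {φ}

theorem ract_map_conj
    (hφ : ∀ (g h : G) (m : M), ract (ract m (φ g)) h = ract (ract m h) (φ g))
    (g h : G) (m : M) :
    ract m (φ (h⁻¹ * g * h)) = ract m (φ g) := by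
  rw [map_mul, map_mul, ract_mul, ract_mul, hφ, ← ract_mul m, ← map_mul, inv_mul_cancel, map_one,
    ract_one]

theorem twist_comm
    (hφ : ∀ (g h : G) (m : M), ract (ract m (φ g)) h = ract (ract m h) (φ g))
    (p q : Fin n) :
    Function.Commute (twist (M := M) φ p) (twist φ q) := by
  wlog hpq : p < q generalizing p q
  · rcases (not_lt.mp hpq).eq_or_lt with rfl | h
    · exact Function.Commute.refl _
    · exact (this q p h).symm
  intro x
  ext j
  · rcases lt_or_ge j p with hjp | hpj
    · simp [twist, hpq, hpq.not_gt, hjp, hjp.trans hpq, mul_assoc]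
    · simp [twist, hpq, hpq.not_gt, hpj.not_gt]
  · rcases lt_or_ge j p with hjp | hpj
    · simp [twist, hpq, hpq.not_gt, hjp, hjp.trans hpq, ← ract_mul, mul_assoc]
    · simp only [twist, hpq, hpq.not_gt, hpj.not_gt, if_true, if_false, ract_map_conj hφ, hφ]

theorem conjFace_conjFace_swap
    (hφ : ∀ (g h : G) (m : M), ract (ract m (φ g)) h = ract (ract m h) (φ g))
    (p : Fin (n + 2)) (q : Fin (n + 1)) (x : Cell G M (n + 2)) :
    conjFace φ (q.predAbove p) (conjFace φ (p.succAbove q) x) = conjFace φ q (conjFace φ p x) := by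
  simp only [conjFace_eq_delFace_twist, ← delFace_twist_succAbove, delFace_delFace_swap,
    Fin.succAbove_succAbove_predAbove]
  rw [twist_comm hφ]

theorem faceDiff_comp_faceDiff_swap
    (hφ : ∀ (g h : G) (m : M), ract (ract m (φ g)) h = ract (ract m h) (φ g))
    (p : Fin (n + 2)) (q : Fin (n + 1)) :
    (faceDiff φ (q.predAbove p)).comp (faceDiff φ (p.succAbove q)) =
      (faceDiff (M := M) φ q).comp (faceDiff φ p) := by
  ext x
  simp only [faceDiff, AddMonoidHom.comp_apply, AddMonoidHom.sub_apply, map_sub,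
    FreeAbelianGroup.map_of_apply, delFace_delFace_swap, delFace_conjFace_swap,
    conjFace_delFace_swap, conjFace_conjFace_swap hφ]
  abel

end CentralAction

theorem dBRU_comp_dBRU_eq_zero_general
    (hφ : ∀ (g h : G) (m : M), ract (ract m (φ g)) h = ract (ract m h) (φ g)) (n : ℕ) :
    (dBRU (M := M) φ n).comp (dBRU φ (n + 1)) = 0 := by
  rw [dBRU_eq_alternating_sum, dBRU_eq_alternating_sum]
  exact alternating_sum_comp_eq_zero _ _ (faceDiff_comp_faceDiff_swap hφ)

end ConjugatedFaces

/-- `C^{BR_U}_*(X;ℤ)` is a chain complex: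
`∂^{BR_U}_{n-1} ∘ ∂^{BR_U}_n = 0` for every `n` (the composites in degrees `≤ 1` vanish
trivially since the chain groups there are zero and the boundary maps are zero). -/
theorem dBRU_comp_dBRU_eq_zero (hφ : ∀ g : G, φ g ∈ Subgroup.center G) :
    ∀ n : ℕ, (dBRU (M := M) φ n).comp (dBRU (M := M) φ (n + 1)) = 0 :=
  dBRU_comp_dBRU_eq_zero_general φ fun g h m => by
    rw [← ract_mul, ← ract_mul, Subgroup.mem_center_iff.mp (hφ g) h]

end GAlex
end

section
/- The family γ = (γ_n) is a chain map from the birack chain complex C^{BR}_*(X;ℤ) to C^{BR_U}_*(X;ℤ), i.e. γ_{n−1} ∘ ∂^{BR}_n = ∂^{BR_U}_n ∘ γ_n for every integer n, and each γ_n is an isomorphism of abelian groups, whose inverse r_n is given on generators by r_n(g₁,…,g_n; m₁,…,m_n) = ((m₁+m₂+⋯+m_n, g₁), (m₂+⋯+m_n, g₂), …, (m_n, g_n)). -/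
/-!
Read a tuple `(a₁,…,a_n)` as continued by zeros, so that `γ` replaces `a_j` by `a_j - a_{j+1}`; the
inverse telescopes. Both faces of a birack chain have the same shape: for additive maps `α`, `β` the
entries before position `p` become `α a_j + (β a_p - α a_p)`, and those after it become `β a_j`
(`α = β = id` for the first face, `α = · g_p` and `β = · φ(g_p)` for the second). The two branches
agree at `a_p`, so the differences on either side of `p` are transformed by `α` and `β`, and the
one that straddles `p` is `α (a_{p-1} - a_p) + β (a_p - a_{p+1})`: this is the merged entry.
-/

open FreeAbelianGroup
open scoped TensorProduct

namespace GAlex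

variable {G M A : Type*} [Group G] [AddCommGroup M] [DistribMulAction Gᵐᵒᵖ M] [AddCommGroup A]

variable (φ : G →* G)

section TupleDifferences

variable {M N : Type*} {n : ℕ}

/-- The extension by zero of an `n`-tuple to a sequence on `ℕ`. It supplies the missing
`m_{n+1} = 0` in the last entry `m_n - m_{n+1}` of `γ_n`. -/
def zeroPad [Zero M] (a : Fin n → M) (k : ℕ) : M := if h : k < n then a ⟨k, h⟩ else 0

/-- The tuple `(a₁ - a₂, …, a_{n-1} - a_n, a_n)` of successive differences, which is the
`M`-component of `γ_n`. -/
def succDiff [Zero M] [Sub M] (a : Fin n → M) (j : Fin n) : M := a j - zeroPad a (j + 1)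

/-- The tuple `(b₁ + ⋯ + b_n, b₂ + ⋯ + b_n, …, b_n)` of tail sums, which is the `M`-component
of `r_n`. -/
def tailSum [AddCommMonoid M] (b : Fin n → M) (j : Fin n) : M := ∑ i ∈ Finset.Ici j, b i

lemma zeroPad_of_lt [Zero M] (a : Fin n → M) {k : ℕ} (hk : k < n) : zeroPad a k = a ⟨k, hk⟩ :=
  dif_pos hk

lemma zeroPad_of_le [Zero M] (a : Fin n → M) {k : ℕ} (hk : n ≤ k) : zeroPad a k = 0 :=
  dif_neg hk.not_gt

lemma zeroPad_val [Zero M] (a : Fin n → M) (j : Fin n) : zeroPad a j = a j :=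
  zeroPad_of_lt a j.isLt

lemma tailSum_eq_sum_Ico_zeroPad [AddCommMonoid M] (b : Fin n → M) (j : Fin n) :
    tailSum b j = ∑ k ∈ Finset.Ico (j : ℕ) n, zeroPad b k := by
  simp only [tailSum, ← Fin.map_valEmbedding_Ici, Finset.sum_map, Fin.valEmbedding_apply,
    zeroPad_val]

lemma zeroPad_tailSum [AddCommMonoid M] (b : Fin n → M) (k : ℕ) :
    zeroPad (tailSum b) k = ∑ l ∈ Finset.Ico k n, zeroPad b l := by
  rcases lt_or_ge k n with hk | hk
  · rw [zeroPad_of_lt _ hk, tailSum_eq_sum_Ico_zeroPad]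
  · rw [zeroPad_of_le _ hk, Finset.Ico_eq_empty_of_le hk, Finset.sum_empty]

lemma zeroPad_succDiff [AddGroup M] (a : Fin n → M) (k : ℕ) :
    zeroPad (succDiff a) k = zeroPad a k - zeroPad a (k + 1) := by
  rcases lt_or_ge k n with hk | hk
  · simp only [zeroPad_of_lt _ hk, succDiff]
  · simp only [zeroPad_of_le _ hk, zeroPad_of_le _ (Nat.le_succ_of_le hk), sub_zero]

lemma succDiff_tailSum [AddCommGroup M] (b : Fin n → M) : succDiff (tailSum b) = b := by
  funext j
  rw [succDiff, zeroPad_tailSum, tailSum_eq_sum_Ico_zeroPad,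
    Finset.sum_eq_sum_Ico_succ_bot j.isLt, add_sub_cancel_right, zeroPad_val]

lemma tailSum_succDiff [AddCommGroup M] (a : Fin n → M) : tailSum (succDiff a) = a := by
  funext j
  calc tailSum (succDiff a) j
      = ∑ k ∈ Finset.Ico (j : ℕ) n, (zeroPad a k - zeroPad a (k + 1)) := by
        simp only [tailSum_eq_sum_Ico_zeroPad, zeroPad_succDiff]
    _ = -∑ k ∈ Finset.Ico (j : ℕ) n, (zeroPad a (k + 1) - zeroPad a k) := by
        simp only [← Finset.sum_neg_distrib, neg_sub]
    _ = zeroPad a j - zeroPad a n := by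
        rw [Finset.sum_Ico_sub _ j.isLt.le, neg_sub]
    _ = a j := by
        rw [zeroPad_of_le a le_rfl, sub_zero, zeroPad_val]

variable [AddCommGroup M] [AddCommGroup N]

/-- The common shape of the two faces of a tuple in the birack complex: omit position `p`, apply
`β` to the entries after it, and apply to the entries before it the translate of `α` that takes
the same value as `β` at `a p`. -/
def glueFace (α β : M →+ N) (p : Fin (n + 1)) (a : Fin (n + 1) → M) : Fin n → N := fun j =>
  if (j : ℕ) < p then α (a j.castSucc) + β (a p) - α (a p) else β (a j.succ)

/-- The common shape of the faces `m_{⟨p⟩}` and `m_{⟨⊲p⟩}`: apply `α` to the entries before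
position `p` and `β` to those from `p` on, and add up the two entries on either side of the cut. -/
def mergeFace (α β : M →+ N) (p : Fin (n + 1)) (b : Fin (n + 1) → M) : Fin n → N := fun j =>
  if (j : ℕ) + 1 < p then α (b j.castSucc)
  else if (j : ℕ) + 1 = p then α (b j.castSucc) + β (b j.succ)
  else β (b j.succ)

lemma glueFace_id (p : Fin (n + 1)) (a : Fin (n + 1) → M) :
    glueFace (AddMonoidHom.id M) (AddMonoidHom.id M) p a = p.removeNth a := by
  funext j
  simp only [glueFace, Fin.removeNth_apply, Fin.succAbove, Fin.lt_def, Fin.val_castSucc,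
    AddMonoidHom.id_apply, add_sub_cancel_right, apply_ite a]

lemma zeroPad_glueFace (α β : M →+ N) (p : Fin (n + 1)) (a : Fin (n + 1) → M) (k : ℕ) :
    zeroPad (glueFace α β p a) k =
      if k < p then α (zeroPad a k) + β (a p) - α (a p) else β (zeroPad a (k + 1)) := by
  rcases lt_or_ge k n with hk | hk
  · rw [zeroPad_of_lt _ hk, zeroPad_of_lt _ (Nat.succ_lt_succ hk), zeroPad_of_lt _ (by omega)]
    rfl
  · rw [zeroPad_of_le _ hk, zeroPad_of_le _ (Nat.succ_le_succ hk), map_zero,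
      if_neg (by omega)]

lemma succDiff_glueFace (α β : M →+ N) (p : Fin (n + 1)) (a : Fin (n + 1) → M) :
    succDiff (glueFace α β p a) = mergeFace α β p (succDiff a) := by
  funext j
  rw [succDiff, zeroPad_glueFace]
  simp only [glueFace, mergeFace, succDiff, Fin.val_castSucc, Fin.val_succ, map_sub,
    ← zeroPad_val a]
  rcases lt_trichotomy ((j : ℕ) + 1) p with hj | hj | hj
  · rw [if_pos (by omega), if_pos hj, if_pos hj]
    abel
  · rw [if_pos (by omega), if_neg hj.not_lt, if_neg hj.not_lt, if_pos hj, ← hj]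
    abel
  · rw [if_neg (by omega), if_neg hj.not_gt, if_neg hj.not_gt, if_neg hj.ne']

end TupleDifferences

section FaceSums

variable {X X' Y Y' : Type*} {n : ℕ}

/-- The boundary map `∑_p (-1)^p (d_p - e_p)` of free abelian groups built from two families of
faces. -/
def faceDiffSum (d e : Fin n → X → Y) : FreeAbelianGroup X →+ FreeAbelianGroup Y :=
  lift fun x => ∑ p : Fin n, (-1 : ℤ) ^ (p : ℕ) • (of (d p x) - of (e p x))

lemma map_comp_faceDiffSum {d e : Fin n → X → Y} {d' e' : Fin n → X' → Y'} {f : X → X'}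
    {g : Y → Y'} (hd : ∀ p x, g (d p x) = d' p (f x)) (he : ∀ p x, g (e p x) = e' p (f x)) :
    (FreeAbelianGroup.map g).comp (faceDiffSum d e) =
      (faceDiffSum d' e').comp (FreeAbelianGroup.map f) := by
  ext x
  simp only [AddMonoidHom.comp_apply, faceDiffSum, lift_apply_of, map_of_apply, map_sum, map_zsmul,
    map_sub, hd, he]

end FaceSums

section TupleEquiv

variable {S N : Type*} [AddCommGroup N] {n : ℕ}

/-- The bijection of bases underlying `γ_n` and its inverse `r_n`. -/
def gammaEquiv (n : ℕ) : (Fin n → N × S) ≃ (Fin n → S) × (Fin n → N) where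
  toFun x := (fun j => (x j).2, succDiff fun j => (x j).1)
  invFun y j := (tailSum y.2 j, y.1 j)
  left_inv x := by simp only [tailSum_succDiff]
  right_inv y := by simp only [succDiff_tailSum]

lemma gammaMap_eq_map (n : ℕ) :
    gammaMap (G := S) (M := N) n = FreeAbelianGroup.map (gammaEquiv n) := rfl

lemma rMap_eq_map (n : ℕ) :
    rMap (G := S) (M := N) n = FreeAbelianGroup.map (gammaEquiv n).symm := rfl

theorem rMap_comp_gammaMap (n : ℕ) :
    (rMap (G := S) (M := N) n).comp (gammaMap n) = AddMonoidHom.id _ := by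
  rw [rMap_eq_map, gammaMap_eq_map, ← FreeAbelianGroup.map_comp, Equiv.symm_comp_self,
    FreeAbelianGroup.map_id]

theorem gammaMap_comp_rMap (n : ℕ) :
    (gammaMap (G := S) (M := N) n).comp (rMap n) = AddMonoidHom.id _ := by
  rw [rMap_eq_map, gammaMap_eq_map, ← FreeAbelianGroup.map_comp, Equiv.self_comp_symm,
    FreeAbelianGroup.map_id]

lemma dMmer_eq_mergeFace (p : Fin (n + 1)) (b : Fin (n + 1) → N) :
    dMmer n p b = mergeFace (AddMonoidHom.id N) (AddMonoidHom.id N) p b := rfl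

lemma gammaEquiv_removeNth (p : Fin (n + 1)) (x : Fin (n + 1) → N × S) :
    gammaEquiv n (p.removeNth x) =
      (dGdel n p (gammaEquiv (n + 1) x).1, dMmer n p (gammaEquiv (n + 1) x).2) := by
  refine Prod.ext rfl ?_
  calc succDiff (p.removeNth fun j => (x j).1)
      = succDiff (glueFace (AddMonoidHom.id N) (AddMonoidHom.id N) p fun j => (x j).1) := by
        rw [glueFace_id]
    _ = dMmer n p (succDiff fun j => (x j).1) := by
        rw [succDiff_glueFace, dMmer_eq_mergeFace]

end TupleEquiv

section Faces

variable {n : ℕ}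

/-- The face of `(x₁,…,x_n)` in the birack complex that acts by `x_p`: it is
`(x₁ ⊳ x_p, …, x_{p-1} ⊳ x_p, x_{p+1} ⊚ x_p, …, x_n ⊚ x_p)`. -/
def twistedFace (p : Fin (n + 1)) (x : Fin (n + 1) → M × G) : Fin n → M × G := fun j =>
  if (j : ℕ) < p then under φ (x j.castSucc) (x p) else overOp φ (x j.succ) (x p)

/-- The right action `m ↦ m · g` of `g` as an additive map. -/
def ractHom (M : Type*) [AddCommGroup M] [DistribMulAction Gᵐᵒᵖ M] (g : G) : M →+ M :=
  DistribSMul.toAddMonoidHom M (MulOpposite.op g)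

lemma dMconj_eq_mergeFace (p : Fin (n + 1)) (g : Fin (n + 1) → G) (b : Fin (n + 1) → M) :
    dMconj φ n p g b = mergeFace (ractHom M (g p)) (ractHom M (φ (g p))) p b := rfl

lemma fst_twistedFace (p : Fin (n + 1)) (x : Fin (n + 1) → M × G) :
    (fun j => (twistedFace φ p x j).1) =
      glueFace (ractHom M (x p).2) (ractHom M (φ (x p).2)) p fun j => (x j).1 := by
  funext j
  exact apply_ite Prod.fst _ _ _

lemma snd_twistedFace (p : Fin (n + 1)) (x : Fin (n + 1) → M × G) :
    (fun j => (twistedFace φ p x j).2) = dGconj n p fun j => (x j).2 := by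
  funext j
  exact apply_ite Prod.snd _ _ _

lemma gammaEquiv_twistedFace (p : Fin (n + 1)) (x : Fin (n + 1) → M × G) :
    gammaEquiv n (twistedFace φ p x) =
      (dGconj n p (gammaEquiv (n + 1) x).1,
        dMconj φ n p (gammaEquiv (n + 1) x).1 (gammaEquiv (n + 1) x).2) := by
  refine Prod.ext (snd_twistedFace φ p x) ?_
  calc succDiff (fun j => (twistedFace φ p x j).1)
      = succDiff (glueFace (ractHom M (x p).2) (ractHom M (φ (x p).2)) p fun j => (x j).1) := by
        rw [fst_twistedFace]
    _ = dMconj φ n p (fun j => (x j).2) (succDiff fun j => (x j).1) := by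
        rw [succDiff_glueFace, dMconj_eq_mergeFace]

end Faces

lemma dBR_eq_faceDiffSum (n : ℕ) :
    dBR (M := M) φ n = faceDiffSum (fun p => p.removeNth) (twistedFace φ) := rfl

lemma dBRU_eq_faceDiffSum (n : ℕ) :
    dBRU (M := M) φ n = faceDiffSum (fun p y => (dGdel n p y.1, dMmer n p y.2))
      (fun p y => (dGconj n p y.1, dMconj φ n p y.1 y.2)) := rfl

theorem gammaMap_comp_dBR (n : ℕ) :
    (gammaMap (G := G) (M := M) n).comp (dBR φ n) =
      (dBRU (M := M) φ n).comp (gammaMap (n + 1)) := by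
  rw [gammaMap_eq_map, gammaMap_eq_map, dBR_eq_faceDiffSum, dBRU_eq_faceDiffSum]
  exact map_comp_faceDiffSum gammaEquiv_removeNth (gammaEquiv_twistedFace φ)

theorem gamma_chainMap_and_gamma_iso_general :
    (∀ n : ℕ,
        (gammaMap (G := G) (M := M) n).comp (dBR φ n) =
          (dBRU (M := M) φ n).comp (gammaMap (n + 1))) ∧
      (∀ n : ℕ,
        (rMap (G := G) (M := M) n).comp (gammaMap n) =
            AddMonoidHom.id (FreeAbelianGroup (Fin n → M × G)) ∧
          (gammaMap (G := G) (M := M) n).comp (rMap n) =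
            AddMonoidHom.id (FreeAbelianGroup ((Fin n → G) × (Fin n → M)))) :=
  ⟨gammaMap_comp_dBR φ, fun n => ⟨rMap_comp_gammaMap n, gammaMap_comp_rMap n⟩⟩

/-- `γ = (γ_n)` is a chain map `C^{BR}_*(X;ℤ) → C^{BR_U}_*(X;ℤ)` and each
`γ_n` is an isomorphism of abelian groups with inverse `r_n` given on generators by
`r_n(g₁,…,g_n; m₁,…,m_n) = ((m₁+⋯+m_n, g₁), …, (m_n, g_n))`. -/
theorem gamma_chainMap_and_gamma_iso (hφ : ∀ g : G, φ g ∈ Subgroup.center G) :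
    (∀ n : ℕ,
        (gammaMap (G := G) (M := M) n).comp (dBR φ n) =
          (dBRU (M := M) φ n).comp (gammaMap (n + 1))) ∧
      (∀ n : ℕ,
        (rMap (G := G) (M := M) n).comp (gammaMap n) =
            AddMonoidHom.id (FreeAbelianGroup (Fin n → M × G)) ∧
          (gammaMap (G := G) (M := M) n).comp (rMap n) =
            AddMonoidHom.id (FreeAbelianGroup ((Fin n → G) × (Fin n → M)))) :=
  gamma_chainMap_and_gamma_iso_general φ

end GAlex
end

section
/- Let f : M³ → A be a G-invariant A-multilinear map. Then the birack 3-cocycle Φ_f := f ∘ ψ₃ ∘ γ₃ : C^{BR}_3(X;ℤ) → A of the G-Alexander biquandle X satisfies Φ_f((m₁,g₁),(m₂,g₂),(m₃,g₃)) = f((m₁−m₂) − (m₁−m₂)·(φ(g₂)⁻¹g₂), m₂ − m₃, m₃ − m₃·(φ(g₃)g₃⁻¹)) for all m₁,m₂,m₃ ∈ M and g₁,g₂,g₃ ∈ G. -/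
open FreeAbelianGroup
open scoped TensorProduct

namespace GAlex

variable {G M A : Type*} [Group G] [AddCommGroup M] [DistribMulAction Gᵐᵒᵖ M] [AddCommGroup A]

variable (φ : G →* G)

/-- The subgroup of `G`-coinvariants relations in `C^{gp}_n(M;ℤ)`:
generated by all `(m₁g,…,m_ng) − (m₁,…,m_n)`. -/
def coinvSub (n : ℕ) : AddSubgroup (FreeAbelianGroup (Fin n → M)) :=
  AddSubgroup.closure
    {z | ∃ (m : Fin n → M) (g : G),
        z = FreeAbelianGroup.of (fun i => ract (m i) g) - FreeAbelianGroup.of m}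

/-- The coinvariant group chain group `C^{gp}_n(M;ℤ)_G`. -/
abbrev CgpG (n : ℕ) : Type _ :=
  FreeAbelianGroup (Fin n → M) ⧸ coinvSub (G := G) (M := M) n

/-- The group-homology boundary map `∂^{gp}_{n+1} : C^{gp}_{n+1}(M;ℤ) → C^{gp}_n(M;ℤ)`
(it is `0` in degrees `≤ 1`, which agrees with this formula at `n = 0`). -/
def dgp (n : ℕ) :
    FreeAbelianGroup (Fin (n + 1) → M) →+ FreeAbelianGroup (Fin n → M) :=
  FreeAbelianGroup.lift fun m =>
    (∑ p : Fin (n + 1), (-1 : ℤ) ^ (p : ℕ) • FreeAbelianGroup.of (dMmer n p m)) +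
      (-1 : ℤ) ^ (n + 1) • FreeAbelianGroup.of fun j : Fin n => m j.castSucc

/-- `|k| = k₁ + ⋯ + k_n`. -/
def wt {n : ℕ} (k : Fin n → Bool) : ℕ := ∑ i, if k i then 1 else 0

/-- `g_{k,i} = φ(g₀^{k₀} ⋯ g_i^{k_i}) · g_{i+1}^{k_{i+1}} ⋯ g_{n-1}^{k_{n-1}}`
(indices written `0`-based; the products are ordered). -/
def gki {n : ℕ} (g : Fin n → G) (k : Fin n → Bool) (i : Fin n) : G :=
  φ ((((List.finRange n).filter fun j => decide (j ≤ i)).map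
        fun j => if k j then g j else 1).prod) *
    (((List.finRange n).filter fun j => decide (i < j)).map
        fun j => if k j then g j else 1).prod

/-- The value of `ψ` on a generator:
`Σ_{k, k₀ = 0} (−1)^{|k|} (m₀ g_{k,0}, …, m_n g_{k,n})`, as an element of the free
abelian group (before passing to coinvariants). -/
def psiVal (n : ℕ) (x : (Fin (n + 1) → G) × (Fin (n + 1) → M)) :
    FreeAbelianGroup (Fin (n + 1) → M) :=
  ∑ k ∈ Finset.univ.filter fun k : Fin (n + 1) → Bool => k 0 = false,
    (-1 : ℤ) ^ wt k • FreeAbelianGroup.of fun i => ract (x.2 i) (gki φ x.1 k i)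

/-- `ψ` as a homomorphism into the free abelian group (before coinvariants). -/
def psiFree (n : ℕ) :
    FreeAbelianGroup ((Fin (n + 1) → G) × (Fin (n + 1) → M)) →+
      FreeAbelianGroup (Fin (n + 1) → M) :=
  FreeAbelianGroup.lift (psiVal φ n)

/-- The homomorphism `ψ : C^{BR_U} → C^{gp}(M;ℤ)_G`. -/
def psiG (n : ℕ) :
    FreeAbelianGroup ((Fin (n + 1) → G) × (Fin (n + 1) → M)) →+
      CgpG (G := G) (M := M) (n + 1) :=
  (QuotientAddGroup.mk' (coinvSub (G := G) (M := M) (n + 1))).comp (psiFree φ n)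

/-- The homomorphism `ψ_{•,λ}`, sending a generator `x` to `ψ(x) ⊗ λ(x₁)` where `x₁` is the
first `G`-entry of `x`. -/
noncomputable def psiLam (lam : G → A) (n : ℕ) :
    FreeAbelianGroup ((Fin (n + 1) → G) × (Fin (n + 1) → M)) →+
      TensorProduct ℤ (CgpG (G := G) (M := M) (n + 1)) A :=
  FreeAbelianGroup.lift fun x =>
    (QuotientAddGroup.mk' (coinvSub (G := G) (M := M) (n + 1)) (psiVal φ n x)) ⊗ₜ[ℤ]
      lam (x.1 0)

/-- `D^{gp}_n(M;ℤ)_G`: the image in the coinvariants of the subgroup generated by tuples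
with a vanishing entry in a position `1 ≤ i ≤ n−1`. -/
def DgpGsub (n : ℕ) : AddSubgroup (CgpG (G := G) (M := M) n) :=
  (AddSubgroup.closure
      {z : FreeAbelianGroup (Fin n → M) |
        ∃ (m : Fin n → M) (i : Fin n),
          (i : ℕ) + 1 < n ∧ m i = 0 ∧ z = FreeAbelianGroup.of m}).map
    (QuotientAddGroup.mk' (coinvSub (G := G) (M := M) n))

theorem ract_ract (m : M) (g h : G) : ract (ract m g) h = ract m (g * h) := by
  rw [ract, ract, ract, MulOpposite.op_mul, mul_smul]

theorem sum_filter_apply_zero_eq {α β : Type*} [Fintype α] [DecidableEq α] [AddCommMonoid β]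
    {n : ℕ} (a : α) (F : (Fin (n + 1) → α) → β) :
    ∑ k with k 0 = a, F k = ∑ k : Fin n → α, F (Fin.cons a k) := by
  refine Finset.sum_nbij' Fin.tail (Fin.cons (α := fun _ => α) a) ?_ ?_ ?_ ?_ ?_
  · simp
  · simp
  · simp only [Finset.mem_filter_univ]
    rintro k rfl
    exact Fin.cons_self_tail k
  · simp
  · simp only [Finset.mem_filter_univ]
    rintro k rfl
    rw [Fin.cons_self_tail]

theorem sum_fin_two_fun_bool {β : Type*} [AddCommMonoid β] (F : (Fin 2 → Bool) → β) :
    ∑ k, F k = F ![true, true] + F ![true, false] + (F ![false, true] + F ![false, false]) := by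
  rw [← (finTwoArrowEquiv Bool).symm.sum_comp, Fintype.sum_prod_type]
  simp only [Fintype.sum_bool, finTwoArrowEquiv_symm_apply]

omit [Group G] [DistribMulAction Gᵐᵒᵖ M] in
theorem gammaMap_three_of (x : Fin 3 → M × G) :
    gammaMap 3 (of x) =
      of (fun j => (x j).2, ![(x 0).1 - (x 1).1, (x 1).1 - (x 2).1, (x 2).1]) := by
  rw [gammaMap, lift_apply_of]
  congr 2
  ext j
  fin_cases j <;> simp

/-- The triple `(m₀·gh, m₁·φ(g)h, m₂·φ(gh))`. With `g = g₁^{k₁}` and `h = g₂^{k₂}` these are the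
triples that occur in `ψ₃(g₀, g₁, g₂; m₀, m₁, m₂)`. -/
def psiTriple (m : Fin 3 → M) (g h : G) : Fin 3 → M :=
  ![ract (m 0) (g * h), ract (m 1) (φ g * h), ract (m 2) (φ (g * h))]

theorem ract_gki_eq_psiTriple (g : Fin 3 → G) (m : Fin 3 → M) (k : Fin 2 → Bool) :
    (fun i => ract (m i) (gki φ g (Fin.cons false k) i)) =
      psiTriple φ m (if k 0 then g 1 else 1) (if k 1 then g 2 else 1) := by
  have finRange_three : List.finRange 3 = [0, 1, 2] := by decide
  have cons_one : (Fin.cons false k : Fin 3 → Bool) 1 = k 0 := rfl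
  have cons_two : (Fin.cons false k : Fin 3 → Bool) 2 = k 1 := rfl
  ext i
  fin_cases i <;>
    simp [gki, psiTriple, finRange_three, cons_one, cons_two, -mul_ite, -ite_mul]

theorem wt_cons_false {n : ℕ} (k : Fin n → Bool) :
    wt (Fin.cons false k : Fin (n + 1) → Bool) = wt k := by
  rw [wt, wt, Fin.sum_univ_succ]
  simp only [Fin.cons_zero, Fin.cons_succ, Bool.false_eq_true, if_false, zero_add]

theorem psiVal_two (g : Fin 3 → G) (m : Fin 3 → M) :
    psiVal φ 2 (g, m) =
      of (psiTriple φ m 1 1) - of (psiTriple φ m (g 1) 1) - of (psiTriple φ m 1 (g 2)) +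
        of (psiTriple φ m (g 1) (g 2)) := by
  rw [psiVal, sum_filter_apply_zero_eq, sum_fin_two_fun_bool]
  simp only [wt_cons_false, ract_gki_eq_psiTriple]
  simp only [wt, Fin.sum_univ_two, Matrix.cons_val_zero, Matrix.cons_val_one,
    Bool.false_eq_true, if_true, if_false]
  module

/- Acting diagonally by `(φ(g)h)⁻¹`, with `φ(g)` and `φ(h)` central, separates the variables:
`g` then moves only the first entry, and `h` only the last. -/
theorem apply_psiTriple_of_invariant {S : Type*} (hφ : ∀ g : G, φ g ∈ Subgroup.center G)
    (f : M → M → M → S)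
    (hfG : ∀ (m n p : M) (g : G), f (ract m g) (ract n g) (ract p g) = f m n p)
    (m : Fin 3 → M) (g h : G) :
    f (psiTriple φ m g h 0) (psiTriple φ m g h 1) (psiTriple φ m g h 2) =
      f (ract (m 0) ((φ g)⁻¹ * g)) (m 1) (ract (m 2) (φ h * h⁻¹)) := by
  have φ_comm (x y : G) : y * φ x = φ x * y := Subgroup.mem_center_iff.1 (hφ x) y
  have first_entry : (φ g)⁻¹ * g * (φ g * h) = g * h := by
    rw [mul_assoc, ← mul_assoc g, φ_comm, mul_assoc, inv_mul_cancel_left]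
  have last_entry : φ h * h⁻¹ * (φ g * h) = φ (g * h) := by
    rw [← φ_comm g, mul_assoc, inv_mul_cancel_left, φ_comm, map_mul]
  rw [← hfG _ (m 1) _ (φ g * h), ract_ract, ract_ract, first_entry, last_entry]
  rfl

theorem map_sub_sub_of_map_add {P Q : Type*} [AddGroup P] [AddGroup Q] (B : P → Q → A)
    (hl : ∀ p p' q, B (p + p') q = B p q + B p' q)
    (hr : ∀ p q q', B p (q + q') = B p q + B p q') (p p' : P) (q q' : Q) :
    B (p - p') (q - q') = B p q - B p' q - B p q' + B p' q' := by
  have left_sub (y : Q) : B (p - p') y = B p y - B p' y :=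
    (AddMonoidHom.mk' (B · y) (hl · · y)).map_sub p p'
  have right_sub (x : P) : B x (q - q') = B x q - B x q' :=
    (AddMonoidHom.mk' (B x) (hr x)).map_sub q q'
  rw [left_sub, right_sub, right_sub]
  abel

theorem lift_psiVal_two_of_invariant (hφ : ∀ g : G, φ g ∈ Subgroup.center G) (f : M → M → M → A)
    (hf₁ : ∀ m m' n p : M, f (m + m') n p = f m n p + f m' n p)
    (hf₃ : ∀ m n p p' : M, f m n (p + p') = f m n p + f m n p')
    (hfG : ∀ (m n p : M) (g : G), f (ract m g) (ract n g) (ract p g) = f m n p)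
    (g : Fin 3 → G) (m : Fin 3 → M) :
    lift (fun v : Fin 3 → M => f (v 0) (v 1) (v 2)) (psiVal φ 2 (g, m)) =
      f (m 0 - ract (m 0) ((φ (g 1))⁻¹ * g 1)) (m 1)
        (m 2 - ract (m 2) (φ (g 2) * (g 2)⁻¹)) := by
  rw [map_sub_sub_of_map_add (f · (m 1) ·) (hf₁ · · (m 1) ·) (hf₃ · (m 1)), psiVal_two]
  simp only [map_add, map_sub, lift_apply_of, apply_psiTriple_of_invariant φ hφ f hfG,
    map_one, inv_one, mul_one, ract_one]

theorem birack_three_cocycle_formula_general (hφ : ∀ g : G, φ g ∈ Subgroup.center G)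
    (f : M → M → M → A)
    (hf₁ : ∀ m m' n p : M, f (m + m') n p = f m n p + f m' n p)
    (hf₃ : ∀ m n p p' : M, f m n (p + p') = f m n p + f m n p')
    (hfG : ∀ (m n p : M) (g : G), f (ract m g) (ract n g) (ract p g) = f m n p)
    (m₁ m₂ m₃ : M) (g₁ g₂ g₃ : G) :
    lift (fun v : Fin 3 → M => f (v 0) (v 1) (v 2))
        (psiFree φ 2 (gammaMap 3 (of ![(m₁, g₁), (m₂, g₂), (m₃, g₃)]))) =
      f ((m₁ - m₂) - ract (m₁ - m₂) ((φ g₂)⁻¹ * g₂)) (m₂ - m₃)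
        (m₃ - ract m₃ (φ g₃ * g₃⁻¹)) := by
  rw [gammaMap_three_of, psiFree, lift_apply_of]
  exact lift_psiVal_two_of_invariant φ hφ f hf₁ hf₃ hfG _ _

/-- For a `G`-invariant `A`-multilinear map `f : M³ → A`, the birack
`3`-cocycle `Φ_f = f ∘ ψ₃ ∘ γ₃` satisfies
`Φ_f((m₁,g₁),(m₂,g₂),(m₃,g₃)) =
  f((m₁−m₂) − (m₁−m₂)·(φ(g₂)⁻¹g₂), m₂ − m₃, m₃ − m₃·(φ(g₃)g₃⁻¹))`. -/
theorem birack_three_cocycle_formula (hφ : ∀ g : G, φ g ∈ Subgroup.center G)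
    (f : M → M → M → A)
    (hf₁ : ∀ m m' n p : M, f (m + m') n p = f m n p + f m' n p)
    (hf₂ : ∀ m n n' p : M, f m (n + n') p = f m n p + f m n' p)
    (hf₃ : ∀ m n p p' : M, f m n (p + p') = f m n p + f m n p')
    (hfG : ∀ (m n p : M) (g : G), f (ract m g) (ract n g) (ract p g) = f m n p) :
    ∀ (m₁ m₂ m₃ : M) (g₁ g₂ g₃ : G),
      FreeAbelianGroup.lift (fun v : Fin 3 → M => f (v 0) (v 1) (v 2))
          (psiFree φ 2
            (gammaMap 3 (FreeAbelianGroup.of ![(m₁, g₁), (m₂, g₂), (m₃, g₃)]))) =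
        f ((m₁ - m₂) - ract (m₁ - m₂) ((φ g₂)⁻¹ * g₂)) (m₂ - m₃)
          (m₃ - ract m₃ (φ g₃ * g₃⁻¹)) :=
  birack_three_cocycle_formula_general φ hφ f hf₁ hf₃ hfG

end GAlex
end
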